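/- For strict contractions A, B in C_n (complex n×n matrices with operator norm < 1) and any positive integer k, the function (A,B) ↦ det(I - A*B)^{-k} is a positive definite kernel: for any A_1,…,A_m ∈ C_n, the m×m matrix [det(I - A_i* A_j)^{-k}] is Hermitian positive semidefinite. -/

import Mathlib

open Matrix
open scoped ComplexOrder

noncomputable def opNorm {n : ℕ} (A : Matrix (Fin n) (Fin n) ℂ) : ℝ :=
  ‖(Matrix.toEuclideanCLM (𝕜 := ℂ) A : EuclideanSpace ℂ (Fin n) →L[ℂ] EuclideanSpace ℂ (Fin n))‖


open MeasureTheory in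
lemma gauss_one (a u v : ℂ) (ha : 0 < a.re) :
    ∫ z : ℂ, Complex.exp (-(a * (star z * z) + star z * u + z * v))
      = (Real.pi : ℂ) * a⁻¹ * Complex.exp (u * v * a⁻¹) := by
  have ha0 : a ≠ 0 := by rintro rfl; simp at ha
  rw [← (Complex.volume_preserving_equiv_pi.symm).integral_comp
    (MeasurableEquiv.measurableEmbedding _)]
  have h := GaussianFourier.integral_cexp_neg_mul_sum_add (ι := Fin 2) ha
    ![-(u + v), Complex.I * (u - v)]
  have e1 : ((Real.pi : ℂ) / a) ^ ((Fintype.card (Fin 2) : ℂ) / 2) = (Real.pi : ℂ) * a⁻¹ := by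
    simp [div_eq_mul_inv]
  rw [e1] at h
  have e2 : (∑ i, (![-(u + v), Complex.I * (u - v)] : Fin 2 → ℂ) i ^ 2) / (4 * a)
      = u * v * a⁻¹ := by
    simp only [Fin.sum_univ_two]
    simp
    field_simp
    linear_combination ((u - v) ^ 2) * Complex.I_sq
  rw [e2] at h
  rw [← h]
  congr 1
  ext p
  congr 1
  rw [Complex.measurableEquivPi_symm_apply]
  simp only [Fin.sum_univ_two]
  simp
  linear_combination (a * (p 1 : ℂ) ^ 2) * Complex.I_sq

noncomputable def qf {n : ℕ} (N : Matrix (Fin n) (Fin n) ℂ) (z : Fin n → ℂ) : ℂ :=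
  ∑ i, ∑ j, star (z i) * N i j * z j

lemma qf_continuous {n : ℕ} (N : Matrix (Fin n) (Fin n) ℂ) : Continuous (qf N) := by
  unfold qf; fun_prop

noncomputable def schurC {n : ℕ} (N : Matrix (Fin (n+1)) (Fin (n+1)) ℂ) :
    Matrix (Fin n) (Fin n) ℂ :=
  Matrix.of fun i j => N i.succ j.succ - N i.succ 0 * N 0 j.succ * (N 0 0)⁻¹

lemma det_schurC {n : ℕ} (N : Matrix (Fin (n+1)) (Fin (n+1)) ℂ) (h : N 0 0 ≠ 0) :
    N.det = N 0 0 * (schurC N).det := by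
  let B : Matrix (Fin (n+1)) (Fin (n+1)) ℂ := Matrix.of fun i j =>
    N i j - (Fin.cons 0 (fun i : Fin n => N i.succ 0 * (N 0 0)⁻¹) : Fin (n+1) → ℂ) i * N 0 j
  have hB : N.det = B.det := by
    apply Matrix.det_eq_of_forall_row_eq_smul_add_const
      (Fin.cons 0 (fun i : Fin n => N i.succ 0 * (N 0 0)⁻¹) : Fin (n+1) → ℂ) 0
    · simp
    · intro i j
      simp [B]
  rw [hB, Matrix.det_succ_column_zero, Fin.sum_univ_succ]
  have h0 : ∀ i : Fin n, B i.succ 0 = 0 := by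
    intro i; simp [B]; field_simp; simp
  have h1 : B.submatrix Fin.succ Fin.succ = schurC N := by
    ext i j; simp [B, schurC]; ring
  simp [h0, h1]
  left; simp [B]

lemma qf_cons {n : ℕ} (N : Matrix (Fin (n+1)) (Fin (n+1)) ℂ) (w : ℂ) (z : Fin n → ℂ) :
    qf N (Fin.cons w z) = N 0 0 * (star w * w) + star w * (∑ j, N 0 j.succ * z j)
      + w * (∑ i, star (z i) * N i.succ 0) + ∑ i, ∑ j, star (z i) * N i.succ j.succ * z j := by
  simp only [qf, Fin.sum_univ_succ, Fin.cons_zero, Fin.cons_succ, Finset.sum_add_distrib,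
    Finset.mul_sum]
  have : ∀ i, star (z i) * N i.succ 0 * w = w * (star (z i) * N i.succ 0) := fun i => by ring
  simp only [this, mul_assoc]
  ring

lemma qf_schurC {n : ℕ} (N : Matrix (Fin (n+1)) (Fin (n+1)) ℂ) (z : Fin n → ℂ) :
    qf (schurC N) z = (∑ i, ∑ j, star (z i) * N i.succ j.succ * z j)
      - (∑ j, N 0 j.succ * z j) * (∑ i, star (z i) * N i.succ 0) * (N 0 0)⁻¹ := by
  rw [mul_comm (∑ j, N 0 j.succ * z j), Finset.sum_mul_sum, Finset.sum_mul,
    ← Finset.sum_sub_distrib]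
  refine Finset.sum_congr rfl fun i _ => ?_
  rw [Finset.sum_mul, ← Finset.sum_sub_distrib]
  refine Finset.sum_congr rfl fun j _ => ?_
  simp [schurC]; ring

def Accr {n : ℕ} (c : ℝ) (N : Matrix (Fin n) (Fin n) ℂ) : Prop :=
  ∀ z : Fin n → ℂ, c * ∑ i, ‖z i‖ ^ 2 ≤ (qf N z).re

lemma Accr.re_pos {n : ℕ} {c : ℝ} (hc : 0 < c) {N : Matrix (Fin (n+1)) (Fin (n+1)) ℂ}
    (h : Accr c N) : 0 < (N 0 0).re := by
  have := h (Fin.cons 1 0)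
  rw [qf_cons] at this
  simp [Fin.sum_univ_succ] at this
  linarith

lemma Accr.schur {n : ℕ} {c : ℝ} (hc : 0 < c) {N : Matrix (Fin (n+1)) (Fin (n+1)) ℂ}
    (h : Accr c N) : Accr c (schurC N) := by
  intro z
  have ha := h.re_pos hc
  have ha0 : N 0 0 ≠ 0 := by intro h; simp [h] at ha
  have := h (Fin.cons (-((N 0 0)⁻¹ * ∑ j, N 0 j.succ * z j)) z)
  have e : qf N (Fin.cons (-((N 0 0)⁻¹ * ∑ j, N 0 j.succ * z j)) z) = qf (schurC N) z := by
    rw [qf_cons, qf_schurC]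
    generalize ∑ j, N 0 j.succ * z j = p
    generalize N 0 0 = a at *
    have : a * (star (-(a⁻¹ * p)) * -(a⁻¹ * p)) = - (star (-(a⁻¹ * p)) * p) := by
      field_simp
    rw [this]; ring
  rw [e, Fin.sum_univ_succ] at this
  simp only [Fin.cons_zero, Fin.cons_succ] at this
  nlinarith [sq_nonneg ‖(-((N 0 0)⁻¹ * ∑ j, N 0 j.succ * z j))‖]

open MeasureTheory in
lemma Accr.integrable {n : ℕ} {c : ℝ} (hc : 0 < c) {N : Matrix (Fin n) (Fin n) ℂ}
    (h : Accr c N) : Integrable (fun z : Fin n → ℂ => Complex.exp (-qf N z)) := by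
  have h1 : Integrable (fun z : ℂ => Real.exp (-(c * ‖z‖ ^ 2))) := by
    have := (GaussianFourier.integrable_cexp_neg_mul_sq_norm_add (V := ℂ) (b := c)
      (by simpa using hc) 0 0).norm
    refine this.congr (Filter.Eventually.of_forall fun z => ?_)
    simp only [Complex.norm_exp]
    congr 1
    simp [← Complex.ofReal_pow]
  have h2 : Integrable (fun z : Fin n → ℂ => ∏ i, Real.exp (-(c * ‖z i‖ ^ 2))) :=
    Integrable.fintype_prod (f := fun _ (z : ℂ) => Real.exp (-(c * ‖z‖ ^ 2))) fun _ => h1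
  refine h2.mono' ?_ (Filter.Eventually.of_forall fun z => ?_)
  · have := qf_continuous N
    exact (by fun_prop : Continuous fun z => Complex.exp (-qf N z)).aestronglyMeasurable
  · rw [Complex.norm_exp, ← Real.exp_sum]
    apply Real.exp_le_exp.2
    have := h z
    rw [Finset.sum_neg_distrib, ← Finset.mul_sum]
    simpa using this

open MeasureTheory in
lemma gauss_int {c : ℝ} (hc : 0 < c) : ∀ (n : ℕ) (N : Matrix (Fin n) (Fin n) ℂ), Accr c N →
    ∫ z : Fin n → ℂ, Complex.exp (-qf N z) = (Real.pi : ℂ) ^ n * N.det⁻¹ := by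
  intro n
  induction n with
  | zero => intro N _; simp [qf, integral_unique, Measure.real, volume_pi]
  | succ n ih =>
    intro N h
    have ha := h.re_pos hc
    have ha0 : N 0 0 ≠ 0 := by intro h; simp [h] at ha
    have mp := (volume_preserving_piFinSuccAbove (fun _ : Fin (n+1) => ℂ) 0).symm
    have hi := h.integrable hc
    rw [← mp.integrable_comp_emb (MeasurableEquiv.measurableEmbedding _)] at hi
    rw [← mp.integral_comp (MeasurableEquiv.measurableEmbedding _)]
    have ec : ∀ p : ℂ × (Fin n → ℂ),
      (MeasurableEquiv.piFinSuccAbove (fun _ : Fin (n+1) => ℂ) 0).symm p = Fin.cons p.1 p.2 := by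
      intro p
      simp [MeasurableEquiv.piFinSuccAbove, Fin.insertNthEquiv]
    simp only [Function.comp_def, ec] at hi ⊢
    rw [Measure.volume_eq_prod] at hi ⊢
    rw [integral_prod_symm _ hi]
    have step : ∀ z : Fin n → ℂ, ∫ w : ℂ, Complex.exp (-qf N (Fin.cons w z))
        = (Real.pi : ℂ) * (N 0 0)⁻¹ * Complex.exp (-qf (schurC N) z) := by
      intro z
      have e : ∀ w, Complex.exp (-qf N (Fin.cons w z)) =
        Complex.exp (-(N 0 0 * (star w * w) + star w * (∑ j, N 0 j.succ * z j)
          + w * (∑ i, star (z i) * N i.succ 0))) *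
        Complex.exp (-∑ i, ∑ j, star (z i) * N i.succ j.succ * z j) := by
        intro w
        rw [qf_cons, ← Complex.exp_add]; congr 1; ring
      simp only [e]
      rw [integral_mul_const, gauss_one _ _ _ ha, mul_assoc, ← Complex.exp_add, qf_schurC]
      congr 2
      ring
    simp only [step]
    rw [integral_const_mul, ih _ (h.schur hc), det_schurC N ha0, mul_inv]
    ring

lemma psd_tendsto {m : ℕ} (F : ℕ → Matrix (Fin m) (Fin m) ℂ) (G : Matrix (Fin m) (Fin m) ℂ)
    (hF : ∀ k, (F k).PosSemidef)
    (h : ∀ i j, Filter.Tendsto (fun k => F k i j) Filter.atTop (nhds (G i j))) :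
    G.PosSemidef := by
  rw [Matrix.posSemidef_iff_dotProduct_mulVec]
  constructor
  · ext i j
    have h1 := (h j i).star
    have h2 : (fun k => star (F k j i)) = fun k => F k i j := by
      ext k; exact (hF k).isHermitian.apply i j
    rw [h2] at h1
    exact tendsto_nhds_unique h1 (h i j)
  · intro x
    refine ge_of_tendsto' (f := fun k => star x ⬝ᵥ (F k *ᵥ x)) (x := Filter.atTop) ?_
      fun k => (hF k).dotProduct_mulVec_nonneg x
    simp only [dotProduct, mulVec]
    exact tendsto_finsetSum _ fun i _ => tendsto_const_nhds.mul
      (tendsto_finsetSum _ fun j _ => (h i j).mul tendsto_const_nhds)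

lemma psd_pow {m : ℕ} {G : Matrix (Fin m) (Fin m) ℂ} (hG : G.PosSemidef) (k : ℕ) :
    (Matrix.of fun i j => G i j ^ k).PosSemidef := by
  induction k with
  | zero =>
    have := Matrix.posSemidef_vecMulVec_self_star (fun _ : Fin m => (1:ℂ))
    convert this using 1
    ext i j; simp [vecMulVec]
  | succ k ih =>
    have h : (Matrix.of fun i j => G i j ^ (k + 1)) = (Matrix.of fun i j => G i j ^ k) ⊙ G := by
      ext i j; simp [pow_succ]
    rw [h]
    exact ih.hadamard hG

lemma psd_exp {m : ℕ} {G : Matrix (Fin m) (Fin m) ℂ} (hG : G.PosSemidef) :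
    (Matrix.of fun i j => Complex.exp (G i j)).PosSemidef := by
  apply psd_tendsto (fun N => ∑ d ∈ Finset.range N,
    ((d.factorial : ℂ)⁻¹) • (Matrix.of fun i j => G i j ^ d))
  · intro N
    apply Matrix.posSemidef_sum
    intro d _
    apply (psd_pow hG d).smul
    have : (0:ℝ) ≤ (d.factorial : ℝ)⁻¹ := by positivity
    have h2 := Complex.zero_le_real.2 this
    push_cast at h2
    exact h2
  · intro i j
    have := (NormedSpace.expSeries_div_hasSum_exp (G i j)).tendsto_sum_nat
    rw [← Complex.exp_eq_exp_ℂ] at this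
    simpa [Matrix.sum_apply, div_eq_inv_mul] using this

lemma qf_gram {n : ℕ} (A B : Matrix (Fin n) (Fin n) ℂ) (z : Fin n → ℂ) :
    qf (Aᴴ * B) z = star (A *ᵥ z) ⬝ᵥ (B *ᵥ z) := by
  have : qf (Aᴴ * B) z = star z ⬝ᵥ ((Aᴴ * B) *ᵥ z) := by
    simp [qf, dotProduct, mulVec, Finset.mul_sum, mul_assoc]
  rw [this, ← Matrix.mulVec_mulVec, Matrix.dotProduct_mulVec, Matrix.star_mulVec]

lemma qf_one {n : ℕ} (z : Fin n → ℂ) :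
    qf (1 : Matrix (Fin n) (Fin n) ℂ) z = ((∑ i, ‖z i‖ ^ 2 : ℝ) : ℂ) := by
  simp [qf, Matrix.one_apply, Complex.conj_mul']

lemma qf_sub {n : ℕ} (A B : Matrix (Fin n) (Fin n) ℂ) (z : Fin n → ℂ) :
    qf (A - B) z = qf A z - qf B z := by
  simp [qf, mul_sub, sub_mul, Finset.sum_sub_distrib]

lemma accr_of {n : ℕ} (A B : Matrix (Fin n) (Fin n) ℂ) (r : ℝ) (hA : opNorm A ≤ r)
    (hB : opNorm B ≤ r) : Accr (1 - r ^ 2) (1 - Aᴴ * B) := by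
  intro z
  have hr : 0 ≤ r := le_trans (norm_nonneg _) hA
  rw [qf_sub, qf_one, qf_gram]
  have e : star (A *ᵥ z) ⬝ᵥ (B *ᵥ z) = inner ℂ (WithLp.toLp 2 (A *ᵥ z)) (WithLp.toLp 2 (B *ᵥ z)) := by
    rw [EuclideanSpace.inner_eq_star_dotProduct, dotProduct_comm]
  have key : ∀ C : Matrix (Fin n) (Fin n) ℂ, opNorm C ≤ r →
      ‖WithLp.toLp 2 (C *ᵥ z)‖ ≤ r * ‖WithLp.toLp 2 z‖ := by
    intro C hC
    have := (Matrix.toEuclideanCLM (𝕜 := ℂ) C).le_of_opNorm_le hC (WithLp.toLp 2 z)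
    simpa using this
  have h1 := norm_inner_le_norm (𝕜 := ℂ) (WithLp.toLp 2 (A *ᵥ z)) (WithLp.toLp 2 (B *ᵥ z))
  have h2 := Complex.re_le_norm (inner ℂ (WithLp.toLp 2 (A *ᵥ z)) (WithLp.toLp 2 (B *ᵥ z)))
  have h3 := mul_le_mul (key A hA) (key B hB) (norm_nonneg _) (by positivity)
  have h4 : ‖WithLp.toLp 2 z‖ ^ 2 = ∑ i, ‖z i‖ ^ 2 := by
    rw [EuclideanSpace.norm_sq_eq]
  rw [e, Complex.sub_re, Complex.ofReal_re, ← h4]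
  nlinarith

open MeasureTheory in
lemma psd_integral {α : Type*} [MeasurableSpace α] (μ : Measure α) {m : ℕ}
    (F : α → Matrix (Fin m) (Fin m) ℂ) (hF : ∀ a, (F a).PosSemidef)
    (hi : ∀ i j, Integrable (fun a => F a i j) μ) :
    (Matrix.of fun i j => ∫ a, F a i j ∂μ).PosSemidef := by
  rw [Matrix.posSemidef_iff_dotProduct_mulVec]
  constructor
  · ext i j
    simp only [conjTranspose_apply, of_apply]
    have : star (∫ a, F a j i ∂μ) = ∫ a, star (F a j i) ∂μ := integral_conj.symm
    rw [this]
    congr 1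
    ext a
    exact (hF a).isHermitian.apply i j
  · intro x
    have : star x ⬝ᵥ ((Matrix.of fun i j => ∫ a, F a i j ∂μ) *ᵥ x)
        = ∫ a, star x ⬝ᵥ (F a *ᵥ x) ∂μ := by
      simp only [dotProduct, mulVec, of_apply]
      rw [integral_finsetSum]
      · refine Finset.sum_congr rfl fun i _ => ?_
        rw [integral_const_mul, integral_finsetSum]
        · simp only [integral_mul_const]
        · exact fun j _ => (hi i j).mul_const _
      · exact fun i _ => (integrable_finsetSum _ fun j _ => (hi i j).mul_const _).const_mul _
    rw [this]
    exact integral_nonneg fun a => (hF a).dotProduct_mulVec_nonneg x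

/-- For every positive integer `k`, `(A,B) ↦ det(I - AᴴB)⁻ᵏ` is a positive definite
kernel on strict contractions: every Gram-type matrix built from it is positive
semidefinite. -/
theorem det_inv_pow_posdef_kernel {n : ℕ} (k : ℕ) (hk : 0 < k)
    (m : ℕ) (A : Fin m → Matrix (Fin n) (Fin n) ℂ) (hA : ∀ i, opNorm (A i) < 1) :
    (Matrix.of fun i j : Fin m =>
      (Matrix.det (1 - (A i)ᴴ * A j))⁻¹ ^ k).PosSemidef := by
  refine psd_pow (G := Matrix.of fun i j => (Matrix.det (1 - (A i)ᴴ * A j))⁻¹) ?_ k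
  have hacc : ∀ i j, ∃ c : ℝ, 0 < c ∧ Accr c (1 - (A i)ᴴ * A j) := by
    intro i j
    have h0 : 0 ≤ opNorm (A i) := norm_nonneg _
    refine ⟨1 - (max (opNorm (A i)) (opNorm (A j))) ^ 2, ?_,
      accr_of _ _ _ (le_max_left _ _) (le_max_right _ _)⟩
    have h1 := max_lt (hA i) (hA j)
    have h2 : 0 ≤ max (opNorm (A i)) (opNorm (A j)) := h0.trans (le_max_left _ _)
    nlinarith
  have hpsd := psd_integral MeasureTheory.volume
    (fun z : Fin n → ℂ => Matrix.of fun i j : Fin m => Complex.exp (-qf (1 - (A i)ᴴ * A j) z))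
    (by
      intro z
      have hG : (Matrix.of fun i j : Fin m => qf ((A i)ᴴ * A j) z).PosSemidef := by
        have := Matrix.posSemidef_conjTranspose_mul_self
          (Matrix.of fun (s : Fin n) (i : Fin m) => (A i *ᵥ z) s)
        convert this using 1
        ext i j
        simp [qf_gram, Matrix.mul_apply, dotProduct]
      have h2 := (psd_exp hG).smul
        (a := ((Real.exp (-∑ i, ‖z i‖ ^ 2) : ℝ) : ℂ))
        (by exact_mod_cast (Real.exp_pos _).le)
      convert h2 using 1
      ext i j
      simp only [of_apply, Matrix.smul_apply, smul_eq_mul]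
      rw [Complex.ofReal_exp, ← Complex.exp_add, qf_sub, qf_one]
      congr 1
      push_cast
      ring)
    (by
      intro i j
      obtain ⟨c, hc, h⟩ := hacc i j
      exact h.integrable hc)
  have h3 := hpsd.smul (a := (((Real.pi ^ n)⁻¹ : ℝ) : ℂ))
    (by exact_mod_cast (by positivity : (0:ℝ) ≤ (Real.pi ^ n)⁻¹))
  convert h3 using 1
  ext i j
  obtain ⟨c, hc, h⟩ := hacc i j
  simp only [of_apply, Matrix.smul_apply, smul_eq_mul]
  rw [gauss_int hc n _ h]
  have : (Real.pi : ℂ) ≠ 0 := by exact_mod_cast Real.pi_ne_zero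
  push_cast
  field_simp
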